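/- arXiv:2311.05806 — 2 statements merged into one kernel-verified Lean document; each statement's English description precedes it below -/
import Mathlib

section
/- Let n ≥ 3 and 0 < c ≤ b. Let V = (v_{ij}) be an n×n symmetric matrix in the class L_n(1/b, 1/c), i.e. v_{ii} = Σ_{j≠i} v_{ij} for every i and 1/b ≤ v_{ij} ≤ 1/c for all i ≠ j. Let S = diag(1/v_{11}, …, 1/v_{nn}), and for r ∈ {1, …, n−1} let V_{22} and S_{22} be the bottom-right (n−r)×(n−r) blocks of V and S. Then max{ ‖V^{-1} − S‖_max , ‖V_{22}^{-1} − S_{22}‖_max } ≤ (2b²/(c(n−1)²))·( n·b/(2(n−2)c) + 1/2 ), where ‖·‖_max is the maximum absolute entry norm. (Paper's Lemma 2.) -/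
open Finset

section OffDiagonalBounds

variable {n : ℕ} {V : Matrix (Fin n) (Fin n) ℝ} {m M : ℝ}

lemma le_of_row_bounds (hn : 3 ≤ n) (hm : 0 < m)
    (hdiag : ∀ i, V i i = ∑ j ∈ univ.erase i, V i j)
    (hlb : ∀ i j, i ≠ j → m ≤ V i j) (hub : ∀ i j, i ≠ j → V i j ≤ M)
    {x : Fin n → ℝ} {Y : ℝ} (hY : 0 ≤ Y)
    (hx : ∀ i, x i = 0 ∨ |∑ j, V i j * x j| ≤ Y)
    (i : Fin n) (ht : 0 ≤ x i) (hmax : ∀ k, |x k| ≤ x i) :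
    2 * ((n : ℝ) - 2) * m ^ 2 * x i ≤ Y * (2 * m + M) := by
  have hn3 : (3 : ℝ) ≤ n := by exact_mod_cast hn
  have hcard (k : Fin n) : (((univ.erase k).card : ℕ) : ℝ) = n - 1 := by
    rw [card_erase_of_mem (mem_univ k), card_univ, Fintype.card_fin, Nat.cast_sub (by omega),
      Nat.cast_one]
  have hnonempty : (univ.erase i).Nonempty := by
    rw [← card_pos, card_erase_of_mem (mem_univ i), card_univ, Fintype.card_fin]
    omega
  obtain ⟨j, hj, hjmin⟩ := exists_min_image (univ.erase i) x hnonempty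
  have hji : j ≠ i := ne_of_mem_erase hj
  have hM : m ≤ M := (hlb j i hji).trans (hub j i hji)
  set t := x i with ht_def
  rcases hx i with hi | hi
  · rw [← ht_def] at hi
    rw [hi, mul_zero]
    exact mul_nonneg hY (by linarith)
  have row (k : Fin n) : ∑ l, V k l * x l = V k k * x k + ∑ l ∈ univ.erase k, V k l * x l :=
    (add_sum_erase _ _ (mem_univ k)).symm
  set A := ∑ k ∈ univ.erase i, (t + x k) with hA_def
  have hA : m * A ≤ Y := by
    have h1 : m * A ≤ ∑ k ∈ univ.erase i, V i k * (t + x k) := by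
      rw [hA_def, mul_sum]
      refine sum_le_sum fun k hk => mul_le_mul_of_nonneg_right
        (hlb i k (ne_of_mem_erase hk).symm) ?_
      linarith [(abs_le.mp (hmax k)).1]
    have h2 : ∑ k ∈ univ.erase i, V i k * (t + x k) = ∑ l, V i l * x l := by
      rw [row i, hdiag i, sum_mul, ← sum_add_distrib]
      exact sum_congr rfl fun k _ => mul_add _ _ _
    linarith [(abs_le.mp hi).2]
  have hjA : ((n : ℝ) - 1) * (t + x j) ≤ A := by
    rw [← hcard i, ← nsmul_eq_mul]
    exact card_nsmul_le_sum _ _ _ fun k hk => by linarith [hjmin k hk]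
  have htj : 0 ≤ t + x j := by linarith [(abs_le.mp (hmax j)).1]
  have hmA : ((n : ℝ) - 1) * (t + x j) * m ≤ Y := by nlinarith
  rcases hx j with hj0 | hjY
  · rw [hj0, add_zero] at hmA
    have h1 : ((n : ℝ) - 2) * t * m ≤ Y := by nlinarith [mul_nonneg ht hm.le]
    nlinarith [mul_le_mul_of_nonneg_right h1 hm.le, mul_nonneg hY (hm.le.trans hM)]
  set B := ∑ k ∈ univ.erase j, (t - x k) with hB_def
  have hB : m * B ≤ Y + M * A := by
    have h1 : m * B ≤ ∑ k ∈ univ.erase j, V j k * (t - x k) := by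
      rw [hB_def, mul_sum]
      refine sum_le_sum fun k hk => mul_le_mul_of_nonneg_right
        (hlb j k (ne_of_mem_erase hk).symm) ?_
      linarith [(abs_le.mp (hmax k)).2]
    have h2 : ∑ k ∈ univ.erase j, V j k * (t - x k)
        = V j j * (t + x j) - ∑ l, V j l * x l := by
      have h3 : ∑ k ∈ univ.erase j, V j k * (t - x k)
          = V j j * t - ∑ l ∈ univ.erase j, V j l * x l := by
        rw [hdiag j, sum_mul, ← sum_sub_distrib]
        exact sum_congr rfl fun k _ => mul_sub _ _ _
      rw [h3, row j]
      ring
    have h4 : V j j ≤ ((n : ℝ) - 1) * M := by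
      rw [hdiag j, ← hcard j, ← nsmul_eq_mul]
      exact sum_le_card_nsmul _ _ _ fun k hk => hub j k (ne_of_mem_erase hk).symm
    have h5 := mul_le_mul_of_nonneg_right h4 htj
    have h6 := mul_le_mul_of_nonneg_left hjA (hm.le.trans hM)
    linarith [(abs_le.mp hjY).1]
  have hAB : A + B = 2 * ((n : ℝ) - 2) * t + (t + x j) := by
    have h1 : (t + x i) + A = ∑ k, (t + x k) := add_sum_erase _ (fun k => t + x k) (mem_univ i)
    have h2 : (t - x j) + B = ∑ k, (t - x k) := add_sum_erase _ (fun k => t - x k) (mem_univ j)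
    have h3 : ∑ k, (t + x k) + ∑ k, (t - x k) = 2 * n * t := by
      rw [← sum_add_distrib]
      simp only [add_add_sub_cancel, sum_const, card_univ, Fintype.card_fin, nsmul_eq_mul]
      ring
    linarith
  nlinarith [mul_le_mul_of_nonneg_left hB hm.le, mul_le_mul_of_nonneg_left hA hm.le,
    mul_le_mul_of_nonneg_left hA (hm.le.trans hM), mul_nonneg (sq_nonneg m) htj]

/-- Maximum-norm stability of the rows of `V` on the support of `x`. -/
lemma abs_le_of_row_bounds (hn : 3 ≤ n) (hm : 0 < m)
    (hdiag : ∀ i, V i i = ∑ j ∈ univ.erase i, V i j)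
    (hlb : ∀ i j, i ≠ j → m ≤ V i j) (hub : ∀ i j, i ≠ j → V i j ≤ M)
    {x : Fin n → ℝ} {Y : ℝ} (hY : 0 ≤ Y)
    (hx : ∀ i, x i = 0 ∨ |∑ j, V i j * x j| ≤ Y) (k : Fin n) :
    2 * ((n : ℝ) - 2) * m ^ 2 * |x k| ≤ Y * (2 * m + M) := by
  have hn3 : (3 : ℝ) ≤ n := by exact_mod_cast hn
  obtain ⟨i, -, hi⟩ := exists_max_image univ (fun l => |x l|) ⟨k, mem_univ k⟩
  have hk : 2 * ((n : ℝ) - 2) * m ^ 2 * |x k| ≤ 2 * ((n : ℝ) - 2) * m ^ 2 * |x i| :=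
    mul_le_mul_of_nonneg_left (hi k (mem_univ k))
      (mul_nonneg (by linarith) (sq_nonneg m))
  refine hk.trans ?_
  rcases le_total 0 (x i) with h | h
  · rw [abs_of_nonneg h]
    refine le_of_row_bounds hn hm hdiag hlb hub hY hx i h fun l => ?_
    simpa only [abs_of_nonneg h] using hi l (mem_univ l)
  · rw [abs_of_nonpos h]
    refine le_of_row_bounds (x := fun l => -x l) hn hm hdiag hlb hub hY (fun l => ?_) i
      (neg_nonneg.mpr h) fun l => ?_
    · simpa only [neg_eq_zero, mul_neg, sum_neg_distrib, abs_neg] using hx l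
    · simpa only [abs_neg, abs_of_nonpos h] using hi l (mem_univ l)

variable {ι : Type*} [Fintype ι] {e : ι → Fin n}

lemma abs_le_of_submatrix_mulVec (hn : 3 ≤ n) (hm : 0 < m)
    (hdiag : ∀ i, V i i = ∑ j ∈ univ.erase i, V i j)
    (hlb : ∀ i j, i ≠ j → m ≤ V i j) (hub : ∀ i j, i ≠ j → V i j ≤ M)
    (he : Function.Injective e) {x : ι → ℝ} {Y : ℝ} (hY : 0 ≤ Y)
    (hx : ∀ i, |(V.submatrix e e).mulVec x i| ≤ Y) (k : ι) :
    2 * ((n : ℝ) - 2) * m ^ 2 * |x k| ≤ Y * (2 * m + M) := by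
  have hext (i : ι) : Function.extend e x 0 (e i) = x i := he.extend_apply x 0 i
  rw [← hext k]
  refine abs_le_of_row_bounds hn hm hdiag hlb hub hY (fun i => ?_) (e k)
  by_cases hi : ∃ a, e a = i
  · obtain ⟨a, rfl⟩ := hi
    right
    have hsum : ∑ j, V (e a) j * Function.extend e x 0 j = (V.submatrix e e).mulVec x a := by
      symm
      refine Fintype.sum_of_injective e he _ _ (fun j hj => ?_) fun j => ?_
      · rw [Function.extend_apply' _ _ _ hj, Pi.zero_apply, mul_zero]
      · rw [hext]
        rfl
    rw [hsum]
    exact hx a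
  · left
    rw [Function.extend_apply' _ _ _ hi, Pi.zero_apply]

lemma isUnit_det_submatrix [DecidableEq ι] (hn : 3 ≤ n) (hm : 0 < m)
    (hdiag : ∀ i, V i i = ∑ j ∈ univ.erase i, V i j)
    (hlb : ∀ i j, i ≠ j → m ≤ V i j) (hub : ∀ i j, i ≠ j → V i j ≤ M)
    (he : Function.Injective e) : IsUnit (V.submatrix e e).det := by
  have hn3 : (3 : ℝ) ≤ n := by exact_mod_cast hn
  rw [isUnit_iff_ne_zero]
  intro hdet
  obtain ⟨x, hx0, hx⟩ := Matrix.exists_mulVec_eq_zero_iff.mpr hdet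
  refine hx0 (funext fun k => ?_)
  have h := abs_le_of_submatrix_mulVec hn hm hdiag hlb hub he le_rfl
    (fun i => by rw [hx, Pi.zero_apply, abs_zero]) k
  have hpos : 0 < 2 * ((n : ℝ) - 2) * m ^ 2 := mul_pos (by linarith) (pow_pos hm 2)
  rw [zero_mul] at h
  exact abs_nonpos_iff.mp (nonpos_of_mul_nonpos_right h hpos)

lemma abs_inv_submatrix_sub_diagonal_le [DecidableEq ι] (hn : 3 ≤ n) (hm : 0 < m)
    (hdiag : ∀ i, V i i = ∑ j ∈ univ.erase i, V i j)
    (hlb : ∀ i j, i ≠ j → m ≤ V i j) (hub : ∀ i j, i ≠ j → V i j ≤ M)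
    (he : Function.Injective e) (i k : ι) :
    2 * ((n : ℝ) - 2) * m ^ 2 *
        |((V.submatrix e e)⁻¹ - Matrix.diagonal fun l => 1 / V (e l) (e l)) i k|
      ≤ M / (((n : ℝ) - 1) * m) * (2 * m + M) := by
  have hn3 : (3 : ℝ) ≤ n := by exact_mod_cast hn
  have hM : 0 ≤ M := by
    have hne : (⟨0, by omega⟩ : Fin n) ≠ ⟨1, by omega⟩ := by simp
    exact hm.le.trans ((hlb _ _ hne).trans (hub _ _ hne))
  have hden : 0 < ((n : ℝ) - 1) * m := mul_pos (by linarith) hm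
  have hV (l : Fin n) : ((n : ℝ) - 1) * m ≤ V l l := by
    have hcard : (((univ.erase l).card : ℕ) : ℝ) = n - 1 := by
      rw [card_erase_of_mem (mem_univ l), card_univ, Fintype.card_fin, Nat.cast_sub (by omega),
        Nat.cast_one]
    rw [hdiag l, ← hcard, ← nsmul_eq_mul]
    exact card_nsmul_le_sum _ _ _ fun j hj => hlb l j (ne_of_mem_erase hj).symm
  have hdet := isUnit_det_submatrix hn hm hdiag hlb hub he
  set R := (V.submatrix e e)⁻¹ - Matrix.diagonal fun l => 1 / V (e l) (e l) with hR
  have hprod : V.submatrix e e * R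
      = 1 - V.submatrix e e * Matrix.diagonal fun l => 1 / V (e l) (e l) := by
    rw [hR, mul_sub, Matrix.mul_nonsing_inv _ hdet]
  refine abs_le_of_submatrix_mulVec (x := fun l => R l k) hn hm hdiag hlb hub he
    (div_nonneg hM hden.le) (fun l => ?_) i
  have hcol : (V.submatrix e e).mulVec (fun l => R l k) l = (V.submatrix e e * R) l k := rfl
  rw [hcol, hprod, Matrix.sub_apply, Matrix.mul_diagonal, Matrix.submatrix_apply]
  have hk : 0 < V (e k) (e k) := hden.trans_le (hV _)
  by_cases hlk : l = k
  · subst hlk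
    rw [Matrix.one_apply_eq, mul_one_div_cancel hk.ne', sub_self, abs_zero]
    exact div_nonneg hM hden.le
  · have hne : e l ≠ e k := he.ne hlk
    rw [Matrix.one_apply_ne hlk, zero_sub, abs_neg, mul_one_div, abs_of_nonneg
      (div_nonneg (hm.le.trans (hlb _ _ hne)) hk.le)]
    exact div_le_div₀ hM (hub _ _ hne) hden (hV _)

end OffDiagonalBounds

/-- **Paper's Lemma 2.** For `n ≥ 3`, `0 < c ≤ b` and a symmetric matrix `V` in the class
`L_n(1/b, 1/c)` (i.e. `V i i = ∑_{j ≠ i} V i j` and `1/b ≤ V i j ≤ 1/c` off the diagonal),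
with `S = diag (1 / V i i)` and, for `r ∈ {1, …, n-1}`, `V₂₂` and `S₂₂` the bottom-right
`(n-r) × (n-r)` blocks of `V` and `S`, one has
`max {‖V⁻¹ - S‖_max, ‖V₂₂⁻¹ - S₂₂‖_max} ≤ (2b²/(c(n-1)²)) * (nb/(2(n-2)c) + 1/2)`,
stated here entrywise. -/
theorem approx_inverse_beta_model
    (n : ℕ) (hn : 3 ≤ n) (b c : ℝ) (hc : 0 < c) (hcb : c ≤ b)
    (V : Matrix (Fin n) (Fin n) ℝ) (hVsymm : V.IsSymm)
    (hVdiag : ∀ i, V i i = ∑ j ∈ Finset.univ.erase i, V i j)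
    (hVlb : ∀ i j, i ≠ j → 1 / b ≤ V i j)
    (hVub : ∀ i j, i ≠ j → V i j ≤ 1 / c)
    (S : Matrix (Fin n) (Fin n) ℝ) (hS : S = Matrix.diagonal fun i => 1 / V i i)
    (r : ℕ) (hr1 : 1 ≤ r) (hrn : r ≤ n - 1)
    (e : Fin (n - r) → Fin n) (he : ∀ i, (e i : ℕ) = r + (i : ℕ)) :
    (∀ i j, |(V⁻¹ - S) i j| ≤
        2 * b ^ 2 / (c * ((n : ℝ) - 1) ^ 2) *
          ((n : ℝ) * b / (2 * ((n : ℝ) - 2) * c) + 1 / 2)) ∧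
    (∀ i j, |((V.submatrix e e)⁻¹ - S.submatrix e e) i j| ≤
        2 * b ^ 2 / (c * ((n : ℝ) - 1) ^ 2) *
          ((n : ℝ) * b / (2 * ((n : ℝ) - 2) * c) + 1 / 2)) := by
  have hn3 : (3 : ℝ) ≤ n := by exact_mod_cast hn
  have hb : 0 < b := hc.trans_le hcb
  have key {a : ℝ} (ha : 2 * ((n : ℝ) - 2) * (1 / b) ^ 2 * a
      ≤ 1 / c / (((n : ℝ) - 1) * (1 / b)) * (2 * (1 / b) + 1 / c)) :
      a ≤ 2 * b ^ 2 / (c * ((n : ℝ) - 1) ^ 2) *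
          ((n : ℝ) * b / (2 * ((n : ℝ) - 2) * c) + 1 / 2) := by
    have h1 : 0 < (n : ℝ) - 1 := by linarith
    have h2 : 0 < (n : ℝ) - 2 := by linarith
    have hpos : 0 < 2 * ((n : ℝ) - 2) * (1 / b) ^ 2 := by positivity
    refine le_of_mul_le_mul_left (ha.trans ?_) hpos
    have hl : 1 / c / (((n : ℝ) - 1) * (1 / b)) * (2 * (1 / b) + 1 / c)
        = ((n - 1) * (2 * c + b)) / (c ^ 2 * ((n : ℝ) - 1) ^ 2) := by
      field_simp
    have hr : 2 * ((n : ℝ) - 2) * (1 / b) ^ 2 * (2 * b ^ 2 / (c * ((n : ℝ) - 1) ^ 2) *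
          ((n : ℝ) * b / (2 * ((n : ℝ) - 2) * c) + 1 / 2))
        = (2 * (n * b + (n - 2) * c)) / (c ^ 2 * ((n : ℝ) - 1) ^ 2) := by
      field_simp
    rw [hl, hr]
    refine div_le_div_of_nonneg_right ?_ (by positivity)
    nlinarith
  have hm : 0 < 1 / b := one_div_pos.mpr hb
  subst hS
  refine ⟨fun i j => key ?_, fun i j => key ?_⟩
  · simpa only [Matrix.submatrix_id_id, id_eq] using
      abs_inv_submatrix_sub_diagonal_le hn hm hVdiag hVlb hVub Function.injective_id i j
  · have he_inj : Function.Injective e := fun a a' h => by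
      have h' := congrArg Fin.val h
      rw [he, he] at h'
      exact Fin.ext (Nat.add_left_cancel h')
    rw [Matrix.submatrix_diagonal _ _ he_inj]
    exact abs_inv_submatrix_sub_diagonal_le hn hm hVdiag hVlb hVub he_inj i j
end

section
/- Let r be a fixed positive integer. There is a constant C = C(r) such that for every n > r+2, every 0 < c ≤ b, and every V ∈ L_n(1/b, 1/c), writing S = diag(1/v_{11},…,1/v_{nn}), W = V^{-1} − S with bottom-right (n−r)×(n−r) block W_{22}, and W̃_{22} = V_{22}^{-1} − S_{22} (V_{22}, S_{22} the bottom-right (n−r)×(n−r) blocks of V, S), one has ‖W_{22} − W̃_{22}‖_max ≤ C·b⁶/(n³c⁵). (Paper's supplementary Lemma 10.) -/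
open Finset

/-- Row diagonally dominant matrices whose off-diagonal entries lie in `[1 / b, 1 / c]`. -/
structure Matrix.IsDominantBetween {ι : Type*} [Fintype ι] [DecidableEq ι]
    (A : Matrix ι ι ℝ) (b c : ℝ) : Prop where
  lower : ∀ i j, i ≠ j → 1 / b ≤ A i j
  upper : ∀ i j, i ≠ j → A i j ≤ 1 / c
  diag : ∀ i, ∑ j ∈ univ.erase i, A i j ≤ A i i

namespace Matrix.IsDominantBetween

variable {ι σ : Type*} [Fintype ι] [DecidableEq ι] [Fintype σ] [DecidableEq σ]
  {A : Matrix ι ι ℝ} {b c : ℝ}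

theorem submatrix (hA : A.IsDominantBetween b c) (hb : 0 < b) {e : σ → ι}
    (he : Function.Injective e) : (A.submatrix e e).IsDominantBetween b c where
  lower i j hij := hA.lower _ _ (he.ne hij)
  upper i j hij := hA.upper _ _ (he.ne hij)
  diag i := by
    refine le_trans ?_ (hA.diag (e i))
    have hsum : ∑ j ∈ univ.erase i, A.submatrix e e i j
        = ∑ k ∈ (univ.erase i).image e, A (e i) k := by
      rw [sum_image (fun x _ y _ h => he h)]
      rfl
    rw [hsum]
    refine sum_le_sum_of_subset_of_nonneg ?_ ?_
    · intro k hk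
      obtain ⟨j, hj, rfl⟩ := mem_image.1 hk
      exact mem_erase.2 ⟨he.ne (ne_of_mem_erase hj), mem_univ _⟩
    · intro k hk _
      exact (one_div_pos.2 hb).le.trans (hA.lower _ _ (ne_of_mem_erase hk).symm)

/-- The row sum at an index where `x` is nonnegative. -/
theorem sum_le_mulVec (hA : A.IsDominantBetween b c) (x : ι → ℝ) (i : ι) (hi : 0 ≤ x i) :
    ∑ j ∈ univ.erase i, A i j * (x i + x j) ≤ (A *ᵥ x) i := by
  have h : (A *ᵥ x) i = A i i * x i + ∑ j ∈ univ.erase i, A i j * x j :=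
    (add_sum_erase univ (fun j => A i j * x j) (mem_univ i)).symm
  have hd := mul_le_mul_of_nonneg_right (hA.diag i) hi
  simp only [mul_add, sum_add_distrib]
  rw [← sum_mul, h]
  linarith

theorem max_le_of_mulVec_le (hA : A.IsDominantBetween b c) (hc : 0 < c) (hcb : c ≤ b)
    (hcard : 3 ≤ Fintype.card ι) {x : ι → ℝ} {t : ℝ} (ht : ∀ i, |(A *ᵥ x) i| ≤ t)
    {i : ι} (hi : ∀ k, |x k| ≤ x i) :
    x i ≤ 6 * b ^ 2 / (c * Fintype.card ι) * t := by
  have hb : 0 < b := hc.trans_le hcb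
  have hM : 0 ≤ x i := (abs_nonneg _).trans (hi i)
  have ht0 : 0 ≤ t := (abs_nonneg _).trans (ht i)
  have hm : (3 : ℝ) ≤ Fintype.card ι := by exact_mod_cast hcard
  have hcardE : ∀ k : ι, ((univ.erase k).card : ℝ) = Fintype.card ι - 1 := by
    intro k
    rw [card_erase_of_mem (mem_univ k), card_univ, Nat.cast_sub (by omega), Nat.cast_one]
  set m : ℝ := (Fintype.card ι : ℝ) with hm_def
  set M := x i with hM_def
  have hbc : 1 ≤ b / c := (one_le_div hc).2 hcb
  have hlow : ∀ k l, k ≠ l → 1 ≤ b * A k l := by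
    intro k l hkl
    have := mul_le_mul_of_nonneg_left (hA.lower k l hkl) hb.le
    rwa [mul_one_div_cancel hb.ne'] at this
  have hupp : ∀ k l, k ≠ l → b * A k l ≤ b / c := by
    intro k l hkl
    have := mul_le_mul_of_nonneg_left (hA.upper k l hkl) hb.le
    rwa [mul_one_div] at this
  have hT : ∑ j ∈ univ.erase i, (M + x j) ≤ b * t := by
    calc ∑ j ∈ univ.erase i, (M + x j)
        ≤ ∑ j ∈ univ.erase i, b * (A i j * (M + x j)) := by
          refine sum_le_sum fun j hj => ?_
          have h1 := hlow i j (ne_of_mem_erase hj).symm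
          have h2 : 0 ≤ M + x j := by linarith [(abs_le.1 (hi j)).1]
          nlinarith
      _ = b * ∑ j ∈ univ.erase i, A i j * (M + x j) := by rw [mul_sum]
      _ ≤ b * t := by
          refine mul_le_mul_of_nonneg_left ?_ hb.le
          exact (hA.sum_le_mulVec x i hM).trans ((le_abs_self _).trans (ht i))
  have hne : (univ.erase i).Nonempty := by
    rw [← card_pos, card_erase_of_mem (mem_univ i), card_univ]
    omega
  obtain ⟨j, hj, hjmin⟩ := exists_min_image (univ.erase i) x hne
  have hs : (m - 1) * (M + x j) ≤ b * t := by
    refine le_trans ?_ hT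
    rw [← hcardE i, ← nsmul_eq_mul]
    exact card_nsmul_le_sum _ _ _ fun k hk => by linarith [hjmin k hk]
  have hs0 : 0 ≤ M + x j := by linarith [(abs_le.1 (hi j)).1]
  have hbt : 0 ≤ b * t := mul_nonneg hb.le ht0
  have key : m * M ≤ 6 * (b / c) * (b * t) := by
    rcases lt_or_ge 0 (x j) with hxj | hxj
    · nlinarith
    · have hrow : ∑ k ∈ univ.erase j, A j k * (-x j + -x k) ≤ t := by
        refine (hA.sum_le_mulVec (-x) j (by simpa using hxj)).trans ?_
        rw [mulVec_neg]
        exact (le_abs_self _).trans (by simpa using ht j)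
      have hlowrow : ∑ k ∈ univ.erase j, ((M - x k) - b / c * (M + x j)) ≤ b * t := by
        refine le_trans ?_ (mul_le_mul_of_nonneg_left hrow hb.le)
        rw [mul_sum]
        refine sum_le_sum fun k hk => ?_
        have hjk := (ne_of_mem_erase hk).symm
        have h1 := hlow j k hjk
        have h2 := hupp j k hjk
        have h3 : 0 ≤ M - x k := by linarith [(abs_le.1 (hi k)).2]
        nlinarith [mul_nonneg (sub_nonneg.2 h1) h3, mul_nonneg (sub_nonneg.2 h2) hs0]
      rw [sum_sub_distrib, sum_const, nsmul_eq_mul, hcardE j] at hlowrow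
      have hsplit1 := add_sum_erase univ (fun k => M + x k) (mem_univ i)
      have hsplit2 := add_sum_erase univ (fun k => M - x k) (mem_univ j)
      have htot : ∑ k, (M + x k) + ∑ k, (M - x k) = 2 * m * M := by
        rw [← sum_add_distrib]
        simp [hm_def]
        ring
      have hxjM : -x j ≤ M := by linarith
      have hbig : 2 * (m - 2) * M ≤ 2 * (b * t) + b / c * (b * t) := by
        have := mul_le_mul_of_nonneg_left hs (by linarith : 0 ≤ b / c)
        nlinarith
      nlinarith
  have hm0 : 0 < m := by linarith
  have : 6 * b ^ 2 / (c * m) * t = 6 * (b / c) * (b * t) / m := by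
    field_simp
  rw [this, le_div_iff₀ hm0]
  linarith

/-- A dominant matrix is bounded below in the sup norm. -/
theorem abs_le_of_mulVec_le (hA : A.IsDominantBetween b c) (hc : 0 < c) (hcb : c ≤ b)
    (hcard : 3 ≤ Fintype.card ι) {x : ι → ℝ} {t : ℝ} (ht : ∀ i, |(A *ᵥ x) i| ≤ t) (k : ι) :
    |x k| ≤ 6 * b ^ 2 / (c * Fintype.card ι) * t := by
  obtain ⟨i, -, hi⟩ := exists_max_image univ (fun k => |x k|) ⟨k, mem_univ k⟩
  refine (hi k (mem_univ k)).trans ?_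
  rcases le_total 0 (x i) with h | h
  · simp only [abs_of_nonneg h] at hi ⊢
    exact hA.max_le_of_mulVec_le hc hcb hcard ht fun k => hi k (mem_univ k)
  · simp only [abs_of_nonpos h] at hi ⊢
    refine hA.max_le_of_mulVec_le (x := -x) hc hcb hcard (fun l => ?_) fun k => ?_
    · simpa [mulVec_neg] using ht l
    · simpa using hi k (mem_univ k)

theorem isUnit_det (hA : A.IsDominantBetween b c) (hc : 0 < c) (hcb : c ≤ b)
    (hcard : 3 ≤ Fintype.card ι) : IsUnit A.det := by
  rw [isUnit_iff_ne_zero]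
  intro hdet
  obtain ⟨x, hx, hAx⟩ := exists_mulVec_eq_zero_iff.2 hdet
  refine hx (funext fun k => ?_)
  have := hA.abs_le_of_mulVec_le hc hcb hcard (x := x) (t := 0) (fun i => by simp [hAx]) k
  simpa using this

/-- If `y` solves the system restricted to the rows and columns in the range of `e`, with the
right-hand side of the full system solved by `u`, then `y` is close to `u` as soon as `u` is small
outside that range. -/
theorem abs_sub_le_of_submatrix_mulVec (hA : A.IsDominantBetween b c) (hc : 0 < c) (hcb : c ≤ b)
    {e : σ → ι} (he : Function.Injective e) (hcard : 3 ≤ Fintype.card σ) {r : ℕ}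
    (hr : Fintype.card ι ≤ Fintype.card σ + r) {u : ι → ℝ} {y : σ → ℝ} {B : ℝ} (hB : 0 ≤ B)
    (hu : ∀ k, k ∉ Set.range e → |u k| ≤ B)
    (hy : ∀ i, (A.submatrix e e *ᵥ y) i = (A *ᵥ u) (e i)) (i : σ) :
    |u (e i) - y i| ≤ 6 * b ^ 2 / (c * Fintype.card σ) * (r * (B / c)) := by
  have hb : 0 < b := hc.trans_le hcb
  refine (hA.submatrix hb he).abs_le_of_mulVec_le hc hcb hcard (x := fun i => u (e i) - y i)
    (fun l => ?_) i
  have hsplit : (A *ᵥ u) (e l) = (A.submatrix e e *ᵥ (u ∘ e)) l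
      + ∑ k ∈ (univ.image e)ᶜ, A (e l) k * u k := by
    change ∑ k, A (e l) k * u k = ∑ j, A (e l) (e j) * u (e j) + _
    rw [← sum_add_sum_compl (univ.image e) (fun k => A (e l) k * u k),
      sum_image (fun x _ y _ h => he h)]
  have heq : (A.submatrix e e *ᵥ fun i => u (e i) - y i) l
      = -∑ k ∈ (univ.image e)ᶜ, A (e l) k * u k := by
    change (A.submatrix e e *ᵥ (u ∘ e - y)) l = _
    rw [mulVec_sub, Pi.sub_apply, hy, hsplit]
    ring
  rw [heq, abs_neg]
  have hcompl : ((univ.image e)ᶜ.card : ℝ) ≤ r := by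
    rw [card_compl, card_image_of_injective _ he, card_univ]
    exact_mod_cast (by omega)
  calc |∑ k ∈ (univ.image e)ᶜ, A (e l) k * u k|
      ≤ ∑ k ∈ (univ.image e)ᶜ, |A (e l) k * u k| := abs_sum_le_sum_abs _ _
    _ ≤ (univ.image e)ᶜ.card • (B / c) := by
        refine sum_le_card_nsmul _ _ _ fun k hk => ?_
        have hk' : k ∉ Set.range e := by simpa using hk
        have hne : e l ≠ k := fun h => hk' ⟨l, h⟩
        have hpos : 0 ≤ A (e l) k := (one_div_pos.2 hb).le.trans (hA.lower _ _ hne)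
        rw [abs_mul, abs_of_nonneg hpos]
        calc A (e l) k * |u k| ≤ 1 / c * B :=
              mul_le_mul (hA.upper _ _ hne) (hu k hk') (abs_nonneg _) (one_div_pos.2 hc).le
          _ = B / c := by ring
    _ ≤ r * (B / c) := by
        rw [nsmul_eq_mul]
        exact mul_le_mul_of_nonneg_right hcompl (by positivity)

theorem mulVec_inv_col (hdet : IsUnit A.det) (k l : ι) :
    (A *ᵥ fun i => A⁻¹ i l) k = (1 : Matrix ι ι ℝ) k l := by
  rw [← mul_nonsing_inv A hdet]
  rfl

theorem abs_inv_apply_le (hA : A.IsDominantBetween b c) (hc : 0 < c) (hcb : c ≤ b)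
    (hcard : 3 ≤ Fintype.card ι) (k l : ι) :
    |A⁻¹ k l| ≤ 6 * b ^ 2 / (c * Fintype.card ι) := by
  have := hA.abs_le_of_mulVec_le hc hcb hcard (x := fun i => A⁻¹ i l) (t := 1) (fun i => by
    rw [mulVec_inv_col (hA.isUnit_det hc hcb hcard), one_apply]
    split_ifs <;> simp) k
  simpa using this

theorem abs_inv_apply_le_of_ne (hA : A.IsDominantBetween b c) (hc : 0 < c) (hcb : c ≤ b)
    (hcard : 4 ≤ Fintype.card ι) {k l : ι} (hkl : k ≠ l) :
    |A⁻¹ k l| ≤ 6 * b ^ 2 / (c * (Fintype.card ι - 1)) *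
      (6 * b ^ 2 / (c * Fintype.card ι) / c) := by
  have hb : 0 < b := hc.trans_le hcb
  have hsub : Fintype.card {i // i ≠ l} = Fintype.card ι - 1 := by
    simp [Fintype.card_subtype_compl]
  have := hA.abs_sub_le_of_submatrix_mulVec hc hcb (e := fun i : {i // i ≠ l} => (i : ι))
    Subtype.val_injective (by omega) (r := 1) (by omega) (u := fun i => A⁻¹ i l) (y := 0)
    (B := 6 * b ^ 2 / (c * Fintype.card ι)) (by positivity)
    (fun i _ => hA.abs_inv_apply_le hc hcb (by omega) i l) (fun i => by
      rw [mulVec_inv_col (hA.isUnit_det hc hcb (by omega)), one_apply_ne i.2]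
      simp) ⟨k, hkl⟩
  rw [hsub, Nat.cast_sub (by omega)] at this
  simpa using this

end Matrix.IsDominantBetween

/-- **Paper's supplementary Lemma 10.** For a fixed positive integer `r` there is a constant
`C = C(r)` such that for every `n > r + 2`, every `0 < c ≤ b` and every `V ∈ L_n(1/b, 1/c)`,
writing `S = diag (1 / V i i)`, `W = V⁻¹ - S` with bottom-right `(n-r) × (n-r)` block `W₂₂`,
and `W̃₂₂ = V₂₂⁻¹ - S₂₂`, one has `‖W₂₂ - W̃₂₂‖_max ≤ C b⁶ / (n³ c⁵)`, stated entrywise. -/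
theorem block_inverse_difference_bound (r : ℕ) (hr : 0 < r) :
    ∃ C : ℝ, 0 < C ∧
      ∀ n : ℕ, r + 2 < n → ∀ b c : ℝ, 0 < c → c ≤ b →
        ∀ V : Matrix (Fin n) (Fin n) ℝ, V.IsSymm →
          (∀ i, V i i = ∑ j ∈ Finset.univ.erase i, V i j) →
          (∀ i j, i ≠ j → 1 / b ≤ V i j) →
          (∀ i j, i ≠ j → V i j ≤ 1 / c) →
          ∀ e : Fin (n - r) → Fin n, (∀ i, (e i : ℕ) = r + (i : ℕ)) →
            ∀ i j,
              |((V⁻¹ - Matrix.diagonal fun k => 1 / V k k).submatrix e e) i j -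
                  ((V.submatrix e e)⁻¹ - Matrix.diagonal fun k => 1 / V (e k) (e k)) i j| ≤
                C * b ^ 6 / ((n : ℝ) ^ 3 * c ^ 5) := by
  refine ⟨432 * r * (r + 1), by positivity, ?_⟩
  intro n hn b c hc hcb V _ hdiag hlow hupp e he i j
  have hb : 0 < b := hc.trans_le hcb
  have hV : V.IsDominantBetween b c := ⟨hlow, hupp, fun i => (hdiag i).ge⟩
  have hinj : Function.Injective e := by
    intro x y hxy
    have hx := he x
    rw [hxy, he y] at hx
    exact Fin.ext (by omega)
  have hentry : ((V⁻¹ - Matrix.diagonal fun k => 1 / V k k).submatrix e e) i j -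
      ((V.submatrix e e)⁻¹ - Matrix.diagonal fun k => 1 / V (e k) (e k)) i j
      = V⁻¹ (e i) (e j) - (V.submatrix e e)⁻¹ i j := by
    simp [Matrix.diagonal_apply, hinj.eq_iff]
  rw [hentry]
  have hcardV : 4 ≤ Fintype.card (Fin n) := by rw [Fintype.card_fin]; omega
  have hcardE : 3 ≤ Fintype.card (Fin (n - r)) := by rw [Fintype.card_fin]; omega
  have hn4 : (4 : ℝ) ≤ n := by exact_mod_cast (by omega : 4 ≤ n)
  have hrn : (r : ℝ) + 3 ≤ n := by exact_mod_cast (by omega : r + 3 ≤ n)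
  have hr0 : (0 : ℝ) ≤ r := Nat.cast_nonneg r
  have hn1 : (0 : ℝ) < n - 1 := by linarith
  have hnr : (0 : ℝ) < n - r := by linarith
  have h := hV.abs_sub_le_of_submatrix_mulVec hc hcb hinj hcardE (r := r)
    (by simp only [Fintype.card_fin]; omega)
    (u := fun k => V⁻¹ k (e j)) (y := fun k => (V.submatrix e e)⁻¹ k j)
    (B := 6 * b ^ 2 / (c * (n - 1)) * (6 * b ^ 2 / (c * n) / c)) (by positivity)
    (fun k hk => by
      simpa using hV.abs_inv_apply_le_of_ne hc hcb hcardV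
        (fun h => hk ⟨j, h.symm⟩ : k ≠ e j))
    (fun k => by
      rw [Matrix.IsDominantBetween.mulVec_inv_col ((hV.submatrix hb hinj).isUnit_det hc hcb hcardE),
        Matrix.IsDominantBetween.mulVec_inv_col (hV.isUnit_det hc hcb (by omega))]
      simp [Matrix.one_apply, hinj.eq_iff]) i
  rw [Fintype.card_fin, Nat.cast_sub (by omega)] at h
  refine h.trans ?_
  have hinv1 : 1 / ((n : ℝ) - 1) ≤ 2 / n := by
    rw [div_le_div_iff₀ hn1 (by linarith)]
    linarith
  have hinvr : 1 / ((n : ℝ) - r) ≤ (r + 1) / n := by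
    rw [div_le_div_iff₀ hnr (by linarith)]
    nlinarith
  have hn0 : (0 : ℝ) < n := by linarith
  calc 6 * b ^ 2 / (c * (n - r)) *
        (r * (6 * b ^ 2 / (c * (n - 1)) * (6 * b ^ 2 / (c * n) / c) / c))
      = 216 * r * b ^ 6 / (n * c ^ 5) * (1 / ((n : ℝ) - r) * (1 / ((n : ℝ) - 1))) := by
        field_simp
        ring
    _ ≤ 216 * r * b ^ 6 / (n * c ^ 5) * ((r + 1) / n * (2 / n)) := by gcongr
    _ = 432 * r * (r + 1) * b ^ 6 / ((n : ℝ) ^ 3 * c ^ 5) := by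
        field_simp
        ring
end
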